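/- arXiv:2502.05939 — 2 statements merged into one kernel-verified Lean document; each statement's English description precedes it below -/
import Mathlib

section
/- Let λ = (λ_1 ≤ … ≤ λ_n) be a weakly increasing sequence of positive integers with λ_i ≥ i for all i. Then the rook-Eulerian polynomial Q^{λ}(t) is real-rooted. -/
/-!
Closing up the column of the first rook turns the remaining rooks into a placement on a smaller
board, so that the refinement of the rook-Eulerian polynomial by the column of an additional first
rook is obtained from that of the smaller board by `a ↦ (r ↦ ∑_{j < r} a j + t * ∑_{r ≤ j} a j)`.
This operator preserves interlacing. Evaluated at a point of the open upper half-plane, interlacing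
says that certain pairs of complex numbers are in counterclockwise order, which keeps the values
away from zero; hence all roots are real.
-/

open Polynomial

/-- Row-complete rook placements on the Ferrers board `L` (with `n` rows): in row `i` a rook
is placed in column `(p i : ℕ) + 1 ∈ {1, …, L i}`, and all columns are distinct. -/
def RookPlacements {n : ℕ} (L : Fin n → ℕ) : Finset (∀ i : Fin n, Fin (L i)) :=
  Finset.univ.filter fun p => ∀ i j : Fin n, i ≠ j → (p i : ℕ) ≠ (p j : ℕ)

/-- The number of ascents of a rook placement: indices `i` with `σ_i < σ_{i+1}`. -/
def ascCount {n : ℕ} (L : Fin n → ℕ) (p : ∀ i : Fin n, Fin (L i)) : ℕ :=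
  (Finset.univ.filter fun i : Fin n =>
    ∃ h : (i : ℕ) + 1 < n, (p i : ℕ) < (p ⟨(i : ℕ) + 1, h⟩ : ℕ)).card

/-- The rook-Eulerian polynomial `Q^λ(t) = Σ_σ t^{asc(σ)}`, summed over all row-complete
rook placements `σ` on `λ`. -/
noncomputable def rookEulerian {n : ℕ} (L : Fin n → ℕ) : Polynomial ℝ :=
  ∑ p ∈ RookPlacements L, X ^ ascCount L p

/-- A real polynomial is real-rooted if it is nonzero and all of its complex roots are real. -/
def RealRooted (p : Polynomial ℝ) : Prop :=
  p ≠ 0 ∧ ∀ z : ℂ, Polynomial.aeval z p = 0 → z.im = 0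

section Interlacing

attribute [local instance] Complex.finrank_real_complex_fact

local notation "ω" => Complex.orientation.areaForm

theorem areaForm_self_mul (z u : ℂ) : ω u (z * u) = z.im * Complex.normSq u := by
  simp only [Complex.areaForm, Complex.mul_im, Complex.mul_re, Complex.conj_re, Complex.conj_im,
    Complex.normSq_apply]
  ring

theorem areaForm_mul_mul (z u v : ℂ) : ω (z * u) (z * v) = Complex.normSq z * ω u v := by
  simp only [Complex.areaForm, Complex.mul_im, Complex.mul_re, Complex.conj_re, Complex.conj_im,
    Complex.normSq_apply]
  ring

theorem areaForm_add_add_mul_nonneg {z p b : ℂ} (hz : 0 ≤ z.im) (hbp : 0 ≤ ω b p)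
    (hpb : 0 ≤ ω p (z * b)) : 0 ≤ ω (p + b) (p + z * b) := by
  have expand : ω (p + b) (p + z * b) = ω b p + ω p (z * b) + z.im * Complex.normSq b := by
    simp only [map_add, LinearMap.add_apply, Orientation.areaForm_apply_self, areaForm_self_mul]
    ring
  rw [expand]
  have := Complex.normSq_nonneg b
  positivity

variable {ι : Type*}

/-- The value at a point `z` of the upper half-plane of an interlacing sequence of polynomials,
in the sense of Hermite and Biehler. For `i ≤ j`, one passes counterclockwise by at most a half
turn from `a j` to `a i`, and from `a i` to `z * a j`. -/
structure InterlacingAt [Preorder ι] (z : ℂ) (a : ι → ℂ) : Prop where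
  ne_zero : ∀ i, a i ≠ 0
  areaForm_nonneg : ∀ ⦃i j⦄, i ≤ j → 0 ≤ ω (a j) (a i)
  areaForm_mul_nonneg : ∀ ⦃i j⦄, i ≤ j → 0 ≤ ω (a i) (z * a j)

theorem interlacingAt_one [Preorder ι] {z : ℂ} (hz : 0 ≤ z.im) :
    InterlacingAt z (1 : ι → ℂ) where
  ne_zero _ := one_ne_zero
  areaForm_nonneg _ _ _ := by simp
  areaForm_mul_nonneg _ _ _ := by simpa [Complex.areaForm] using hz

namespace InterlacingAt

variable {z : ℂ} {a : ι → ℂ}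

theorem areaForm_sum_nonneg [Preorder ι] (ha : InterlacingAt z a) {s t : Finset ι}
    (hst : ∀ i ∈ s, ∀ j ∈ t, i ≤ j) : 0 ≤ ω (∑ j ∈ t, a j) (∑ i ∈ s, a i) := by
  simp only [map_sum, LinearMap.sum_apply]
  exact Finset.sum_nonneg fun i hi ↦ Finset.sum_nonneg fun j hj ↦ ha.areaForm_nonneg (hst i hi j hj)

theorem areaForm_sum_mul_nonneg [Preorder ι] (ha : InterlacingAt z a) {s t : Finset ι}
    (hst : ∀ i ∈ s, ∀ j ∈ t, i ≤ j) : 0 ≤ ω (∑ i ∈ s, a i) (z * ∑ j ∈ t, a j) := by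
  simp only [Finset.mul_sum, map_sum, LinearMap.sum_apply]
  exact Finset.sum_nonneg fun j hj ↦ Finset.sum_nonneg fun i hi ↦
    ha.areaForm_mul_nonneg (hst i hi j hj)

theorem sum_ne_zero [LinearOrder ι] (ha : InterlacingAt z a) (hz : 0 < z.im) {s : Finset ι}
    (hs : s.Nonempty) : ∑ j ∈ s, a j ≠ 0 := by
  intro h
  have pos : 0 < ∑ j ∈ s, ω (a (s.min' hs)) (z * a j) := by
    refine Finset.sum_pos' (fun j hj ↦ ha.areaForm_mul_nonneg (s.min'_le j hj))
      ⟨s.min' hs, s.min'_mem hs, ?_⟩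
    rw [areaForm_self_mul]
    exact mul_pos hz (Complex.normSq_pos.2 (ha.ne_zero _))
  rw [← map_sum, ← Finset.mul_sum, h, mul_zero, map_zero] at pos
  exact pos.false

end InterlacingAt

variable [LinearOrder ι] {R : Type*} [CommSemiring R]

/-- The operator sending a sequence `a` to `r ↦ ∑_{j < r} a j + t * ∑_{r ≤ j} a j`, with `j` ranging
over `s`. On polynomials, with `t` the variable, it preserves interlacing. -/
def ascentTransfer (t : R) (s : Finset ι) (a : ι → R) (r : ι) : R :=
  ∑ j ∈ s, (if r ≤ j then t else 1) * a j

theorem ascentTransfer_eq_add_mul (t : R) (s : Finset ι) (a : ι → R) (r : ι) :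
    ascentTransfer t s a r = ∑ j ∈ s with j < r, a j + t * ∑ j ∈ s with r ≤ j, a j := by
  rw [ascentTransfer, ← Finset.sum_filter_add_sum_filter_not s (· < r), Finset.mul_sum]
  simp only [not_lt]
  congr 1 <;> refine Finset.sum_congr rfl fun j hj ↦ ?_
  · rw [if_neg (not_le.2 (Finset.mem_filter.1 hj).2), one_mul]
  · rw [if_pos (Finset.mem_filter.1 hj).2]

namespace InterlacingAt

variable {z : ℂ} {a : ι → ℂ}

theorem ascentTransfer_ne_zero (ha : InterlacingAt z a) (hz : 0 < z.im) {s : Finset ι}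
    (hs : s.Nonempty) (r : ι) : ascentTransfer z s a r ≠ 0 := by
  rw [ascentTransfer_eq_add_mul]
  obtain hr | hr := (s.filter (r ≤ ·)).eq_empty_or_nonempty
  · have below : s.filter (· < r) = s := by
      simpa [Finset.filter_eq_empty_iff, Finset.filter_eq_self] using hr
    simpa [hr, below] using ha.sum_ne_zero hz hs
  · intro h
    have lower_nonneg : 0 ≤ ω (∑ j ∈ s with r ≤ j, a j) (∑ j ∈ s with j < r, a j) :=
      ha.areaForm_sum_nonneg fun i hi j hj ↦
        ((Finset.mem_filter.1 hi).2.trans_le (Finset.mem_filter.1 hj).2).le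
    have upper_pos : 0 < ω (∑ j ∈ s with r ≤ j, a j) (z * ∑ j ∈ s with r ≤ j, a j) := by
      rw [areaForm_self_mul]
      exact mul_pos hz (Complex.normSq_pos.2 (ha.sum_ne_zero hz hr))
    have := add_pos_of_nonneg_of_pos lower_nonneg upper_pos
    rw [← map_add, h, map_zero] at this
    exact this.false

/-- The terms with `r ≤ j < r'`, whose sum is `b`, are the only ones whose coefficient changes. -/
theorem exists_ascentTransfer_eq (ha : InterlacingAt z a) (s : Finset ι) {r r' : ι} (hr : r ≤ r') :
    ∃ p b : ℂ, ascentTransfer z s a r = p + z * b ∧ ascentTransfer z s a r' = p + b ∧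
      0 ≤ ω b p ∧ 0 ≤ ω p (z * b) := by
  set low := s.filter (· < r)
  set mid := s.filter fun j ↦ r ≤ j ∧ j < r'
  set high := s.filter (r' ≤ ·)
  have low_le_mid : ∀ i ∈ low, ∀ j ∈ mid, i ≤ j := by grind
  have mid_le_high : ∀ i ∈ mid, ∀ j ∈ high, i ≤ j := by grind
  refine ⟨∑ j ∈ low, a j + z * ∑ j ∈ high, a j, ∑ j ∈ mid, a j, ?_, ?_, ?_, ?_⟩
  · have split : s.filter (r ≤ ·) = mid.disjUnion high (by grind [Finset.disjoint_left]) := by grind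
    rw [ascentTransfer_eq_add_mul, split, Finset.sum_disjUnion]
    ring
  · have split : s.filter (· < r') = low.disjUnion mid (by grind [Finset.disjoint_left]) := by grind
    rw [ascentTransfer_eq_add_mul, split, Finset.sum_disjUnion]
    ring
  · rw [map_add]
    exact add_nonneg (ha.areaForm_sum_nonneg low_le_mid) (ha.areaForm_sum_mul_nonneg mid_le_high)
  · rw [map_add, LinearMap.add_apply, areaForm_mul_mul]
    exact add_nonneg (ha.areaForm_sum_mul_nonneg low_le_mid)
      (mul_nonneg (Complex.normSq_nonneg z) (ha.areaForm_sum_nonneg mid_le_high))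

theorem ascentTransfer (ha : InterlacingAt z a) (hz : 0 < z.im) {s : Finset ι} (hs : s.Nonempty) :
    InterlacingAt z (ascentTransfer z s a) where
  ne_zero := ha.ascentTransfer_ne_zero hz hs
  areaForm_nonneg r r' hr := by
    obtain ⟨p, b, h, h', hbp, hpb⟩ := ha.exists_ascentTransfer_eq s hr
    rw [h, h']
    exact areaForm_add_add_mul_nonneg hz.le hbp hpb
  areaForm_mul_nonneg r r' hr := by
    obtain ⟨p, b, h, h', hbp, hpb⟩ := ha.exists_ascentTransfer_eq s hr
    have hzbp : 0 ≤ ω (z * b) (z * p) := by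
      rw [areaForm_mul_mul]
      exact mul_nonneg (Complex.normSq_nonneg z) hbp
    rw [h, h', add_comm p, mul_add, add_comm (z * p)]
    exact areaForm_add_add_mul_nonneg hz.le hpb hzbp

end InterlacingAt

end Interlacing

section Words

variable {n : ℕ}

/-- The number of ascents of the nonempty word `w 0, …, w n`. -/
def ascents {α : Type*} [LinearOrder α] (w : Fin (n + 1) → α) : ℕ :=
  (Finset.univ.filter fun i : Fin n ↦ w i.castSucc < w i.succ).card

theorem ascents_cons {α : Type*} [LinearOrder α] (x : α) (w : Fin (n + 1) → α) :
    ascents (Fin.cons x w : Fin (n + 2) → α) = (if x < w 0 then 1 else 0) + ascents w := by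
  simp only [ascents, Fin.card_filter_univ_succ', Fin.castSucc_zero, Fin.cons_zero,
    Fin.cons_succ, ← Fin.succ_castSucc]

theorem ascents_comp {α β : Type*} [LinearOrder α] [LinearOrder β] {f : α → β}
    (hf : StrictMono f) (w : Fin (n + 1) → α) : ascents (f ∘ w) = ascents w := by
  simp only [ascents, Function.comp_apply, hf.lt_iff_lt]

theorem ascCount_eq_ascents_cons (L : Fin n → ℕ) (p : ∀ i, Fin (L i)) {r : ℕ}
    (hr : ∀ i, (p i : ℕ) ≤ r) :
    ascCount L p = ascents (Fin.cons r (fun i ↦ (p i : ℕ)) : Fin (n + 1) → ℕ) := by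
  cases n with
  | zero => simp [ascCount, ascents]
  | succ n =>
    rw [ascents_cons, if_neg (hr 0).not_gt, zero_add, ascCount, ascents, Finset.card_filter,
      Finset.card_filter, Fin.sum_univ_castSucc]
    simp [Fin.succ]

/-- The increasing enumeration of the natural numbers other than `x`. -/
def skip (x y : ℕ) : ℕ := if y < x then y else y + 1

theorem skip_strictMono (x : ℕ) : StrictMono (skip x) := by
  intro y y' h
  grind [skip]

theorem skip_of_lt {x y : ℕ} (h : y < x) : skip x y = y := if_pos h

theorem lt_skip_iff {x y : ℕ} : x < skip x y ↔ x ≤ y := by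
  grind [skip]

theorem skip_lt_iff {x y m : ℕ} (hx : x < m) : skip x y < m ↔ y < m - 1 := by
  grind [skip]

theorem ascents_cons_skip_cons (r x : ℕ) (w : Fin n → ℕ) :
    ascents (Fin.cons r (skip r ∘ Fin.cons x w) : Fin (n + 2) → ℕ) =
      (if r ≤ x then 1 else 0) + ascents (Fin.cons x w : Fin (n + 1) → ℕ) := by
  simp only [ascents_cons, ascents_comp (skip_strictMono r), Function.comp_apply, Fin.cons_zero,
    lt_skip_iff]

theorem range_skip (x : ℕ) : Set.range (skip x) = {x}ᶜ := by
  ext y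
  simp only [Set.mem_range, Set.mem_compl_iff, Set.mem_singleton_iff]
  refine ⟨by grind [skip], fun h ↦ ⟨if y < x then y else y - 1, by grind [skip]⟩⟩

theorem injective_cons_skip_iff {x : ℕ} {w : Fin n → ℕ} :
    Function.Injective (Fin.cons x (skip x ∘ w) : Fin (n + 1) → ℕ) ↔ Function.Injective w := by
  have notMem : x ∉ Set.range (skip x ∘ w) := fun h ↦ by
    simpa [range_skip] using Set.range_comp_subset_range w (skip x) h
  rw [Fin.cons_injective_iff, (skip_strictMono x).injective.of_comp_iff]
  exact and_iff_right notMem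

theorem exists_eq_cons_skip {w : Fin (n + 1) → ℕ} (hw : Function.Injective w) :
    ∃ v : Fin n → ℕ, w = Fin.cons (w 0) (skip (w 0) ∘ v) := by
  have mem_range (i : Fin n) : w i.succ ∈ Set.range (skip (w 0)) := by
    simpa [range_skip] using hw.ne (Fin.succ_ne_zero i)
  choose v hv using mem_range
  exact ⟨v, by rw [← Fin.cons_self_tail w]; congr; exact funext fun i ↦ (hv i).symm⟩

end Words

section Placements

variable {n : ℕ} {R : Type*} [CommSemiring R]

/-- The row-complete rook placements on `L`, as words `w` with `0`-based letters `w i < L i`. -/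
def rookWords (L : Fin n → ℕ) : Finset (Fin n → ℕ) :=
  (Fintype.piFinset fun i ↦ Finset.range (L i)).filter Function.Injective

theorem mem_rookWords {L w : Fin n → ℕ} :
    w ∈ rookWords L ↔ (∀ i, w i < L i) ∧ Function.Injective w := by
  simp [rookWords]

theorem sum_rookPlacements {M : Type*} [AddCommMonoid M] (L : Fin n → ℕ) (f : (Fin n → ℕ) → M) :
    ∑ p ∈ RookPlacements L, f (fun i ↦ p i) = ∑ w ∈ rookWords L, f w := by
  refine Finset.sum_nbij (fun p i ↦ (p i : ℕ)) ?_ ?_ ?_ fun _ _ ↦ rfl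
  · intro p hp
    have hp : ∀ i j, i ≠ j → (p i : ℕ) ≠ p j := (Finset.mem_filter.1 hp).2
    exact mem_rookWords.2 ⟨fun i ↦ (p i).isLt, fun i j ↦ Function.mtr (hp i j)⟩
  · intro p _ q _ h
    exact funext fun i ↦ Fin.ext (congrFun h i)
  · intro w hw
    obtain ⟨hlt, hinj⟩ := mem_rookWords.1 hw
    exact ⟨fun i ↦ ⟨w i, hlt i⟩,
      Finset.mem_filter.2 ⟨Finset.mem_univ _, fun i j hij ↦ hinj.ne hij⟩, rfl⟩

/-- The board left when the first row and one of its columns are deleted and the remaining columns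
are closed up. Every later row is taken to contain the deleted column, so it shrinks by one cell. -/
def residualBoard (L : Fin (n + 1) → ℕ) (i : Fin n) : ℕ := L i.succ - 1

theorem cons_skip_mem_rookWords {L : Fin (n + 1) → ℕ} (hL : ∀ i, L 0 ≤ L i) {x : ℕ}
    {w : Fin n → ℕ} :
    (Fin.cons x (skip x ∘ w) : Fin (n + 1) → ℕ) ∈ rookWords L ↔
      x < L 0 ∧ w ∈ rookWords (residualBoard L) := by
  simp only [mem_rookWords, injective_cons_skip_iff, Fin.forall_fin_succ, Fin.cons_zero,
    Fin.cons_succ, Function.comp_apply, residualBoard, and_assoc]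
  refine and_congr_right fun hx ↦ and_congr_left fun _ ↦ forall_congr' fun i ↦ ?_
  exact skip_lt_iff (hx.trans_le (hL i.succ))

theorem sum_rookWords_succ {M : Type*} [AddCommMonoid M] {L : Fin (n + 1) → ℕ}
    (hL : ∀ i, L 0 ≤ L i) (f : (Fin (n + 1) → ℕ) → M) :
    ∑ w ∈ rookWords L, f w = ∑ x ∈ Finset.range (L 0), ∑ w ∈ rookWords (residualBoard L),
      f (Fin.cons x (skip x ∘ w)) := by
  rw [Finset.sum_sigma']
  symm
  refine Finset.sum_nbij (fun p ↦ Fin.cons p.1 (skip p.1 ∘ p.2)) ?_ ?_ ?_ fun _ _ ↦ rfl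
  · rintro ⟨x, w⟩ h
    simpa [cons_skip_mem_rookWords hL] using h
  · rintro ⟨x, v⟩ _ ⟨y, w⟩ _ h
    obtain ⟨rfl : x = y, h : skip x ∘ v = skip x ∘ w⟩ := Fin.cons_inj.1 h
    rw [(skip_strictMono x).injective.comp_left h]
  · intro w hw
    obtain ⟨v, hv⟩ := exists_eq_cons_skip (mem_rookWords.1 hw).2
    refine ⟨⟨w 0, v⟩, ?_, hv.symm⟩
    rw [hv] at hw
    simpa [cons_skip_mem_rookWords hL] using hw

/-- The generating function by ascents, in the variable `t`, of the placements on the board `L`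
preceded by a rook in column `r`, the columns of `L` being moved apart to make room for it. -/
def rookSumFrom (t : R) (L : Fin n → ℕ) (r : ℕ) : R :=
  ∑ w ∈ rookWords L, t ^ ascents (Fin.cons r (skip r ∘ w) : Fin (n + 1) → ℕ)

theorem rookSumFrom_zero (t : R) (L : Fin 0 → ℕ) : rookSumFrom t L = 1 := by
  have univ : rookWords L = Finset.univ := by
    simp [rookWords, Function.injective_of_subsingleton]
  ext r
  simp [rookSumFrom, univ, ascents]

theorem rookSumFrom_succ (t : R) {L : Fin (n + 1) → ℕ} (hL : ∀ i, L 0 ≤ L i) :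
    rookSumFrom t L = ascentTransfer t (Finset.range (L 0)) (rookSumFrom t (residualBoard L)) := by
  ext r
  simp only [rookSumFrom, ascentTransfer, sum_rookWords_succ hL, Finset.mul_sum]
  refine Finset.sum_congr rfl fun x _ ↦ Finset.sum_congr rfl fun w _ ↦ ?_
  rw [ascents_cons_skip_cons, pow_add, pow_ite, pow_one, pow_zero]

/-- A preceding rook to the right of the whole board creates no ascent. -/
theorem rookEulerian_eq_rookSumFrom {L : Fin n → ℕ} {r : ℕ} (hr : ∀ i, L i ≤ r) :
    rookEulerian L = rookSumFrom X L r := by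
  have asc_eq (p : ∀ i, Fin (L i)) :
      ascCount L p = ascents (Fin.cons r (skip r ∘ fun i ↦ (p i : ℕ)) : Fin (n + 1) → ℕ) := by
    have hp (i : Fin n) : (p i : ℕ) < r := (p i).isLt.trans_le (hr i)
    have skip_eq : (skip r ∘ fun i ↦ (p i : ℕ)) = fun i ↦ (p i : ℕ) :=
      funext fun i ↦ skip_of_lt (hp i)
    rw [skip_eq, ascCount_eq_ascents_cons L p fun i ↦ (hp i).le]
  simp only [rookEulerian, rookSumFrom, asc_eq, ← sum_rookPlacements]

theorem interlacingAt_rookSumFrom {z : ℂ} (hz : 0 < z.im) {L : Fin n → ℕ} (hmono : Monotone L)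
    (hL : ∀ i : Fin n, (i : ℕ) + 1 ≤ L i) : InterlacingAt z (rookSumFrom z L) := by
  induction n with
  | zero =>
    rw [rookSumFrom_zero]
    exact interlacingAt_one hz.le
  | succ n ih =>
    rw [rookSumFrom_succ z fun i ↦ hmono (Fin.zero_le i)]
    have residual_mono : Monotone (residualBoard L) := fun i j hij ↦
      Nat.sub_le_sub_right (hmono (Fin.succ_le_succ_iff.2 hij)) 1
    have le_residual (i : Fin n) : (i : ℕ) + 1 ≤ residualBoard L i :=
      Nat.le_sub_of_add_le (hL i.succ)
    have row_nonempty : (Finset.range (L 0)).Nonempty :=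
      Finset.nonempty_range_iff.2 (Nat.one_le_iff_ne_zero.1 (hL 0))
    exact (ih residual_mono le_residual).ascentTransfer hz row_nonempty

end Placements

theorem realRooted_of_forall_im_pos {p : ℝ[X]} (h : ∀ z : ℂ, 0 < z.im → aeval z p ≠ 0) :
    RealRooted p := by
  refine ⟨fun hp ↦ h Complex.I (by simp) (by simp [hp]), fun z hz ↦ ?_⟩
  obtain him | him | him := lt_trichotomy z.im 0
  · refine absurd ?_ (h (starRingEnd ℂ z) (by simpa using him))
    rw [aeval_conj, hz, map_zero]
  · exact him
  · exact absurd hz (h z him)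

/-- For every Ferrers board `λ = (λ_1 ≤ … ≤ λ_n)` of positive integers with `λ_i ≥ i`,
the rook-Eulerian polynomial `Q^λ(t)` is real-rooted. -/
theorem rookEulerian_realRooted (n : ℕ) (L : Fin n → ℕ) (hmono : Monotone L)
    (hL : ∀ i : Fin n, (i : ℕ) + 1 ≤ L i) :
    RealRooted (rookEulerian L) := by
  refine realRooted_of_forall_im_pos fun z hz ↦ ?_
  obtain ⟨r, hr⟩ : ∃ r, ∀ i, L i ≤ r := (Set.finite_range L).bddAbove.imp fun r hr i ↦ hr ⟨i, rfl⟩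
  have value : aeval z (rookEulerian L) = rookSumFrom z L r := by
    simp [rookEulerian_eq_rookSumFrom hr, rookSumFrom]
  rw [value]
  exact (interlacingAt_rookSumFrom hz hmono hL).ne_zero r
end

section
/- For the permutation π = [4, 6, 2, 1, 7, 3, 5] ∈ S_7, the descent-generating polynomial of the lower Bruhat interval, Q^{π}(t) = Σ_{σ ≤_B π} t^{des(σ)}, equals 1 + 43t + 196t² + 168t³ + 23t⁴ + t⁵, and this polynomial is not real-rooted (it has a pair of non-real complex roots). -/
open Polynomial

/-- The number of inversions of a permutation: pairs of positions `i < j` with `σ i > σ j`. -/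
def invCount {n : ℕ} (σ : Equiv.Perm (Fin n)) : ℕ :=
  (Finset.univ.filter fun p : Fin n × Fin n => p.1 < p.2 ∧ σ p.2 < σ p.1).card

/-- One step in the Bruhat order: `τ` is obtained from `σ` by swapping two (not
necessarily adjacent) entries in one-line notation, strictly increasing the number
of inversions. -/
def BruhatStep {n : ℕ} (σ τ : Equiv.Perm (Fin n)) : Prop :=
  (∃ i j : Fin n, i ≠ j ∧ τ = σ * Equiv.swap i j) ∧ invCount σ < invCount τ

/-- The Bruhat order: `σ ≤_B π` iff there is a chain from `σ` to `π` of swaps, each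
strictly increasing the number of inversions. -/
def BruhatLE {n : ℕ} (σ π : Equiv.Perm (Fin n)) : Prop :=
  Relation.ReflTransGen BruhatStep σ π

/-- The number of descents of a permutation: indices `i` with `σ_i > σ_{i+1}`. -/
def desCount {n : ℕ} (σ : Equiv.Perm (Fin n)) : ℕ :=
  (Finset.univ.filter fun i : Fin n =>
    ∃ h : (i : ℕ) + 1 < n, σ ⟨(i : ℕ) + 1, h⟩ < σ i).card

open scoped Classical in
/-- The descent-generating polynomial `Q^π(t) = Σ_{σ ≤_B π} t^{des(σ)}` of the lower
Bruhat interval `[id, π]_B`. -/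
noncomputable def bruhatDesPoly {n : ℕ} (π : Equiv.Perm (Fin n)) : Polynomial ℝ :=
  ∑ σ : Equiv.Perm (Fin n), if BruhatLE σ π then X ^ desCount σ else 0

/-- The permutation `π = [4, 6, 2, 1, 7, 3, 5] ∈ S_7` (in 0-based form). -/
noncomputable def pi7 : Equiv.Perm (Fin 7) :=
  Equiv.ofBijective ![3, 5, 1, 0, 6, 2, 4] (by decide)

/-!
By the tableau criterion, `σ ≤_B π` iff every corner of the permutation matrix of `σ` contains at
most as many dots as the same corner for `π`. For the nontrivial direction, let `a` be the first
position where `σ` and `π` differ and `b > a` the next one whose `σ`-value lies in `(σ a, π a]`: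
swapping the two entries goes up in the Bruhat order and preserves all the rank conditions.

A rank condition at one corner bounds the ranks at the neighbouring corners, so for
`π = [4, 6, 2, 1, 7, 3, 5]` the five corners of its essential set suffice, and the interval can be
enumerated. For the resulting monic quintic, Newton's identities give the negative value `-1339` for
the sum of the fourth powers of the roots, which are therefore not all real.
-/

section Bruhat

variable {n : ℕ} {σ τ π : Equiv.Perm (Fin n)} {a b : Fin n}

/-- The number of dots of the permutation matrix of `σ` in the corner of positions `≤ i` and
values `> j`, compared between permutations to decide the Bruhat order. In one-based notation
this is the rank `σ[i + 1, j + 2]` of Björner and Brenti. -/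
def cornerRank (σ : Equiv.Perm (Fin n)) (i j : Fin n) : ℕ :=
  (Finset.univ.filter fun k => k ≤ i ∧ j < σ k).card

lemma cornerRank_mul_swap (hab : a < b) (hσ : σ a < σ b) (i j : Fin n) :
    cornerRank (σ * Equiv.swap a b) i j =
      cornerRank σ i j + if (a ≤ i ∧ i < b) ∧ σ a ≤ j ∧ j < σ b then 1 else 0 := by
  have split_sum (ρ : Equiv.Perm (Fin n)) : cornerRank ρ i j =
      (∑ k ∈ {a, b}ᶜ, if k ≤ i ∧ j < ρ k then 1 else 0) +
        ((if a ≤ i ∧ j < ρ a then 1 else 0) + if b ≤ i ∧ j < ρ b then 1 else 0) := by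
    rw [cornerRank, Finset.card_filter, ← Finset.sum_compl_add_sum {a, b}, Finset.sum_pair hab.ne]
  have swap_off : ∀ k ∈ ({a, b} : Finset (Fin n))ᶜ, (σ * Equiv.swap a b) k = σ k := by
    intro k hk
    simp only [Finset.mem_compl, Finset.mem_insert, Finset.mem_singleton, not_or] at hk
    rw [Equiv.Perm.mul_apply, Equiv.swap_apply_of_ne_of_ne hk.1 hk.2]
  rw [split_sum, split_sum, Finset.sum_congr rfl fun k hk => by rw [swap_off k hk]]
  simp only [Equiv.Perm.mul_apply, Equiv.swap_apply_left, Equiv.swap_apply_right]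
  grind

-- Swapping `a` and `b` in both coordinates of an inversion gives an inversion of the new
-- permutation unless it reverses the two positions; in that case the pair itself remains one.
lemma invCount_lt_invCount_mul_swap (hab : a < b) (hσ : σ a < σ b) :
    invCount σ < invCount (σ * Equiv.swap a b) := by
  set s := Equiv.swap a b
  have sa : s a = b := Equiv.swap_apply_left a b
  have sb : s b = a := Equiv.swap_apply_right a b
  have sne (k : Fin n) (ha : k ≠ a) (hb : k ≠ b) : s k = k := Equiv.swap_apply_of_ne_of_ne ha hb
  have ss (k : Fin n) : s (s k) = k := Equiv.swap_apply_self a b k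
  let φ : Fin n × Fin n → Fin n × Fin n := fun p => if s p.1 < s p.2 then (s p.1, s p.2) else p
  let I (ρ : Equiv.Perm (Fin n)) : Finset (Fin n × Fin n) :=
    Finset.univ.filter fun p => p.1 < p.2 ∧ ρ p.2 < ρ p.1
  have mem_I (ρ : Equiv.Perm (Fin n)) (p) : p ∈ I ρ ↔ p.1 < p.2 ∧ ρ p.2 < ρ p.1 := by simp [I]
  have hab_mem : (a, b) ∈ I (σ * s) := by simp [mem_I, sa, sb, hab, hσ]
  have maps : ∀ p ∈ I σ, φ p ∈ (I (σ * s)).erase (a, b) := by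
    rintro ⟨k, l⟩ hkl
    simp only [mem_I, Finset.mem_erase, Equiv.Perm.mul_apply, φ] at hkl ⊢
    grind
  have inj : Set.InjOn φ (I σ) := by
    rintro ⟨k, l⟩ hkl ⟨k', l'⟩ hkl' heq
    simp only [Finset.mem_coe, mem_I, φ] at hkl hkl' heq
    grind
  calc invCount σ ≤ ((I (σ * s)).erase (a, b)).card := Finset.card_le_card_of_injOn φ maps inj
    _ < invCount (σ * s) := Finset.card_erase_lt_of_mem hab_mem

lemma bruhatStep_iff :
    BruhatStep σ τ ↔ ∃ a b, a < b ∧ σ a < σ b ∧ τ = σ * Equiv.swap a b := by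
  constructor
  · rintro ⟨⟨i, j, hij, rfl⟩, hinv⟩
    wlog hlt : i < j generalizing i j
    · rw [Equiv.swap_comm] at hinv ⊢
      exact this j i hij.symm hinv (hij.lt_or_gt.resolve_left hlt)
    refine ⟨i, j, hlt, ?_, rfl⟩
    by_contra! hσ
    have hdesc : (σ * Equiv.swap i j) i < (σ * Equiv.swap i j) j := by
      simpa using hσ.lt_of_ne (σ.injective.ne hij.symm)
    have := invCount_lt_invCount_mul_swap hlt hdesc
    rw [mul_assoc, Equiv.swap_mul_self, mul_one] at this
    exact this.asymm hinv
  · rintro ⟨a, b, hab, hσ, rfl⟩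
    exact ⟨⟨a, b, hab.ne, rfl⟩, invCount_lt_invCount_mul_swap hab hσ⟩

lemma BruhatStep.cornerRank_le (h : BruhatStep σ τ) (i j : Fin n) :
    cornerRank σ i j ≤ cornerRank τ i j := by
  obtain ⟨a, b, hab, hσ, rfl⟩ := bruhatStep_iff.1 h
  rw [cornerRank_mul_swap hab hσ]
  exact Nat.le_add_right _ _

lemma BruhatLE.cornerRank_le (h : BruhatLE σ π) (i j : Fin n) :
    cornerRank σ i j ≤ cornerRank π i j := by
  induction h with
  | refl => exact le_rfl
  | tail _ hstep ih => exact ih.trans (hstep.cornerRank_le i j)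

lemma exists_first_ne (hne : σ ≠ π) : ∃ a, (∀ k < a, σ k = π k) ∧ σ a ≠ π a := by
  obtain ⟨a, ha, hmin⟩ := wellFounded_lt.has_min {k | σ k ≠ π k} (DFunLike.ne_iff.1 hne)
  exact ⟨a, fun k hk => not_not.1 fun h => hmin k h hk, ha⟩

lemma apply_le_of_cornerRank_le (hpre : ∀ k < a, σ k = π k)
    (h : cornerRank σ a (π a) ≤ cornerRank π a (π a)) : σ a ≤ π a := by
  by_contra! hlt
  refine h.not_gt (Finset.card_lt_card (Finset.ssubset_iff_of_subset ?_ |>.2 ⟨a, ?_, ?_⟩))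
  · intro k hk
    simp only [Finset.mem_filter, Finset.mem_univ, true_and] at hk ⊢
    grind
  · simpa using hlt
  · simp

lemma exists_next_in_window (hpre : ∀ k < a, σ k = π k) (hlt : σ a < π a) :
    ∃ b, a < b ∧ σ a < σ b ∧ σ b ≤ π a ∧ ∀ k, a < k → k < b → σ a < σ k → π a < σ k := by
  have hwin : a < σ.symm (π a) := by
    by_contra! hle
    rcases hle.lt_or_eq with h | h
    · have := hpre _ h
      rw [Equiv.apply_symm_apply] at this
      exact h.ne (π.injective this).symm
    · rw [← h, Equiv.apply_symm_apply, h] at hlt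
      exact hlt.false
  obtain ⟨b, ⟨hab, hσab, hσb⟩, hmin⟩ :=
    wellFounded_lt.has_min {k | a < k ∧ σ a < σ k ∧ σ k ≤ π a} ⟨σ.symm (π a), hwin, by simpa⟩
  exact ⟨b, hab, hσab, hσb, fun k hak hkb hσk =>
    not_le.1 fun hle => hmin k ⟨hak, hσk, hle⟩ hkb⟩

lemma cornerRank_eq_add_card {i j m : Fin n} (hjm : j ≤ m) :
    cornerRank σ i j =
      cornerRank σ i m + (Finset.univ.filter fun k => k ≤ i ∧ j < σ k ∧ σ k ≤ m).card := by
  rw [cornerRank, cornerRank, ← Finset.card_union_of_disjoint]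
  · congr 1
    grind
  · rw [Finset.disjoint_filter]
    grind

-- Of the values in `(j, π a]`, none occurs in `σ` at a position in `[a, i]`, while `π` has one at
-- `a`; before `a` the two permutations agree.
lemma cornerRank_lt_of_window (hpre : ∀ k < a, σ k = π k)
    (hwin : ∀ k, a < k → k < b → σ a < σ k → π a < σ k) {i j : Fin n}
    (hai : a ≤ i) (hib : i < b) (hσj : σ a ≤ j) (hjπ : j < π a)
    (h : cornerRank σ i (π a) ≤ cornerRank π i (π a)) :
    cornerRank σ i j < cornerRank π i j := by
  rw [cornerRank_eq_add_card hjπ.le, cornerRank_eq_add_card hjπ.le]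
  refine add_lt_add_of_le_of_lt h
    (Finset.card_lt_card (Finset.ssubset_iff_of_subset ?_ |>.2 ⟨a, ?_, ?_⟩))
  · intro k hk
    simp only [Finset.mem_filter, Finset.mem_univ, true_and] at hk ⊢
    grind
  · simpa using ⟨hai, hjπ⟩
  · simpa using fun _ h => absurd h hσj.not_gt

lemma exists_bruhatStep_cornerRank_le (h : ∀ i j, cornerRank σ i j ≤ cornerRank π i j)
    (hne : σ ≠ π) : ∃ τ, BruhatStep σ τ ∧ ∀ i j, cornerRank τ i j ≤ cornerRank π i j := by
  obtain ⟨a, hpre, ha⟩ := exists_first_ne hne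
  have hlt : σ a < π a := (apply_le_of_cornerRank_le hpre (h a (π a))).lt_of_ne ha
  obtain ⟨b, hab, hσab, hσb, hwin⟩ := exists_next_in_window hpre hlt
  refine ⟨σ * Equiv.swap a b, bruhatStep_iff.2 ⟨a, b, hab, hσab, rfl⟩, fun i j => ?_⟩
  rw [cornerRank_mul_swap hab hσab]
  split_ifs with hij
  · obtain ⟨⟨hai, hib⟩, hσj, hjσ⟩ := hij
    exact cornerRank_lt_of_window hpre hwin hai hib hσj (hjσ.trans_le hσb) (h i (π a))
  · exact h i j

theorem bruhatLE_of_cornerRank_le {σ : Equiv.Perm (Fin n)}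
    (h : ∀ i j, cornerRank σ i j ≤ cornerRank π i j) : BruhatLE σ π := by
  by_cases hne : σ = π
  · exact hne ▸ Relation.ReflTransGen.refl
  · obtain ⟨τ, hστ, hτ⟩ := exists_bruhatStep_cornerRank_le h hne
    exact Relation.ReflTransGen.head hστ (bruhatLE_of_cornerRank_le hτ)
termination_by Fintype.card (Fin n × Fin n) - invCount σ
decreasing_by
  have : invCount τ ≤ Fintype.card (Fin n × Fin n) := Finset.card_le_univ _
  have := hστ.2
  omega

theorem bruhatLE_iff_cornerRank_le :
    BruhatLE σ π ↔ ∀ i j, cornerRank σ i j ≤ cornerRank π i j :=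
  ⟨BruhatLE.cornerRank_le, bruhatLE_of_cornerRank_le⟩

lemma cornerRank_le_min (i j : Fin n) : cornerRank σ i j ≤ min (i + 1 : ℕ) (n - 1 - j) := by
  refine le_min ?_ ?_
  · rw [← Fin.card_Iic]
    exact Finset.card_le_card fun k => by simp +contextual
  · rw [← Fin.card_Ioi]
    exact Finset.card_le_card_of_injOn σ (fun k => by simp) σ.injective.injOn

-- The subtractions are truncated: passing to a smaller corner costs at most the number of rows and
-- columns removed, passing to a larger one costs nothing.
lemma cornerRank_le_add (i j i' j' : Fin n) :
    cornerRank σ i j ≤ cornerRank σ i' j' + (i - i' : ℕ) + (j' - j : ℕ) := by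
  classical
  rw [← Fin.card_Ioc, ← Fin.card_Ioc, ← Finset.card_map (s := .Ioc j j') σ.symm.toEmbedding]
  refine (Finset.card_le_card fun k hk => ?_).trans
    ((Finset.card_union_le _ _).trans (Nat.add_le_add_right (Finset.card_union_le _ _) _))
  simp only [Finset.mem_filter, Finset.mem_univ, true_and, Finset.mem_union, Finset.mem_Ioc,
    Finset.mem_map_equiv, Equiv.symm_symm] at hk ⊢
  grind

theorem bruhatLE_iff_forall_mem {E : List (Fin n × Fin n)}
    (hE : ∀ i j : Fin n, min (i + 1 : ℕ) (n - 1 - j) ≤ cornerRank π i j ∨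
      ∃ e ∈ E, cornerRank π e.1 e.2 + (i - e.1 : ℕ) + (e.2 - j : ℕ) ≤ cornerRank π i j) :
    BruhatLE σ π ↔ ∀ e ∈ E, cornerRank σ e.1 e.2 ≤ cornerRank π e.1 e.2 := by
  refine bruhatLE_iff_cornerRank_le.trans ⟨fun h e _ => h e.1 e.2, fun h i j => ?_⟩
  obtain hmin | ⟨e, he, hle⟩ := hE i j
  · exact (cornerRank_le_min i j).trans hmin
  · have := cornerRank_le_add (σ := σ) i j e.1 e.2
    have := h e he
    omega

end Bruhat

section Words

variable {n : ℕ}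

/-- The one-line notation of a permutation, with zero-based values. Plain lists of natural numbers
are what makes enumerating `S_7` inside the kernel feasible. -/
def word (σ : Equiv.Perm (Fin n)) : List ℕ := List.ofFn fun i => (σ i : ℕ)

lemma word_injective : Function.Injective (word (n := n)) := fun _ _ h =>
  Equiv.ext fun i => Fin.ext (congrFun (List.ofFn_injective h) i)

lemma word_perm_range (σ : Equiv.Perm (Fin n)) : (word σ).Perm (List.range n) := by
  simpa [word, Function.comp_def, List.ofFn_eq_map] using
    σ.ofFn_comp_perm (fun i : Fin n => (i : ℕ))

lemma map_word_univ :
    (Finset.univ : Finset (Equiv.Perm (Fin n))).val.map word = (List.range n).permutations' := by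
  refine Multiset.eq_of_le_of_card_le ((Multiset.le_iff_subset ?_).2 fun w hw => ?_) ?_
  · exact Finset.univ.nodup.map word_injective
  · obtain ⟨σ, -, rfl⟩ := Multiset.mem_map.1 hw
    exact List.mem_permutations'.2 (word_perm_range σ)
  · rw [Multiset.card_map, Finset.card_val, Finset.card_univ, Fintype.card_perm, Fintype.card_fin,
      Multiset.coe_card, (List.permutations_perm_permutations' _).symm.length_eq,
      List.length_permutations, List.length_range]

/-- The counterpart of `cornerRank` for a one-line notation. -/
def wordCornerRank (w : List ℕ) (i j : ℕ) : ℕ := (w.take (i + 1)).countP (j < ·)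

/-- The counterpart of `desCount` for a one-line notation. -/
def wordDesCount (w : List ℕ) : ℕ := (w.zip w.tail).countP fun p => p.2 < p.1

lemma countP_take_ofFn {α : Type*} (f : Fin n → α) (p : α → Prop) [DecidablePred p] (i : Fin n) :
    ((List.ofFn f).take (i + 1)).countP (p ·) =
      (Finset.univ.filter fun k => k ≤ i ∧ p (f k)).card := by
  induction n with
  | zero => exact i.elim0
  | succ n ih =>
    rw [List.ofFn_succ, List.take_succ_cons, List.countP_cons, Fin.card_filter_univ_succ', add_comm]
    cases i using Fin.cases with
    | zero => simp
    | succ i => simpa using ih (fun k => f k.succ) i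

lemma wordCornerRank_word (σ : Equiv.Perm (Fin n)) (i j : Fin n) :
    wordCornerRank (word σ) i j = cornerRank σ i j :=
  countP_take_ofFn (fun k => (σ k : ℕ)) (j < ·) i

lemma countP_zip_tail_ofFn {α : Type*} (f : Fin n → α) (r : α → α → Prop) [DecidableRel r] :
    ((List.ofFn f).zip (List.ofFn f).tail).countP (fun p => r p.2 p.1) =
      (Finset.univ.filter fun i : Fin n =>
        ∃ h : (i : ℕ) + 1 < n, r (f ⟨(i : ℕ) + 1, h⟩) (f i)).card := by
  induction n with
  | zero => simp
  | succ n ih =>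
    refine .trans ?_ (Fin.card_filter_univ_succ' _).symm
    cases n with
    | zero =>
      rw [if_neg fun ⟨h, _⟩ => absurd h (by simp), Finset.univ_eq_empty, Finset.filter_empty]
      simp
    | succ n =>
      have ih := ih fun k => f k.succ
      simp only [List.ofFn_succ, List.tail_cons, List.zip_cons_cons, List.countP_cons,
        Nat.add_lt_add_iff_right, Fin.val_succ, decide_eq_true_eq] at ih ⊢
      rw [ih, add_comm]
      congr 2
      exact propext ⟨fun h => ⟨n.succ_pos, h⟩, fun ⟨_, h⟩ => h⟩

lemma wordDesCount_word (σ : Equiv.Perm (Fin n)) : wordDesCount (word σ) = desCount σ :=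
  countP_zip_tail_ofFn (fun k => (σ k : ℕ)) (· < ·)

theorem bruhatDesPoly_eq_sum_words {π : Equiv.Perm (Fin n)} (p : List ℕ → Bool)
    (hp : ∀ σ, BruhatLE σ π ↔ p (word σ)) :
    bruhatDesPoly π =
      ((((List.range n).permutations'.filter p).map wordDesCount).map (X ^ ·)).sum := by
  have coe_filter : ((List.range n).permutations'.filter p : Multiset (List ℕ)) =
      Multiset.filter (p · = true) (List.range n).permutations' := by
    simp only [Multiset.filter_coe, Bool.decide_eq_true]
  rw [List.map_map, ← Multiset.sum_coe, ← Multiset.map_coe, coe_filter, ← map_word_univ,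
    Multiset.filter_map, Multiset.map_map, bruhatDesPoly, ← Finset.sum_filter]
  simp only [hp, Function.comp_def, wordDesCount_word]
  rfl

end Words

/-- The essential set of `π = [4, 6, 2, 1, 7, 3, 5]` in the sense of Fulton: the corners, indexed
as in `cornerRank`, whose rank conditions imply all the others. -/
def pi7EssentialSet : List (Fin 7 × Fin 7) := [(0, 3), (3, 5), (3, 1), (3, 3), (5, 3)]

lemma bruhatLE_pi7_iff (σ : Equiv.Perm (Fin 7)) :
    BruhatLE σ pi7 ↔ ∀ e ∈ pi7EssentialSet, cornerRank σ e.1 e.2 ≤ cornerRank pi7 e.1 e.2 :=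
  bruhatLE_iff_forall_mem (by decide +kernel)

lemma word_pi7 : word pi7 = [3, 5, 1, 0, 6, 2, 4] := by decide

/-- Whether a one-line notation satisfies the rank conditions of `π = [4, 6, 2, 1, 7, 3, 5]` at its
essential set. -/
def wordLEPi7 (w : List ℕ) : Bool :=
  pi7EssentialSet.all fun e =>
    wordCornerRank w e.1 e.2 ≤ wordCornerRank [3, 5, 1, 0, 6, 2, 4] e.1 e.2

lemma bruhatLE_pi7_iff_wordLEPi7 (σ : Equiv.Perm (Fin 7)) :
    BruhatLE σ pi7 ↔ wordLEPi7 (word σ) := by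
  simp only [bruhatLE_pi7_iff, ← wordCornerRank_word, word_pi7, wordLEPi7, List.all_eq_true,
    decide_eq_true_eq]

set_option maxRecDepth 10000 in
lemma descents_pi7 :
    (((List.range 7).permutations'.filter wordLEPi7).map wordDesCount).Perm
    ([0] ++ .replicate 43 1 ++ .replicate 196 2 ++ .replicate 168 3 ++ .replicate 23 4 ++ [5]) := by
  decide +kernel

lemma sum_pow_four_eq_esymm {R : Type*} [CommRing R] (s : Multiset R) :
    (s.map (· ^ 4)).sum = s.esymm 1 ^ 4 - 4 * s.esymm 1 ^ 2 * s.esymm 2 + 2 * s.esymm 2 ^ 2 +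
      4 * s.esymm 1 * s.esymm 3 - 4 * s.esymm 4 := by
  have esymm_cons (a : R) (s : Multiset R) (k : ℕ) :
      (a ::ₘ s).esymm (k + 1) = s.esymm (k + 1) + a * s.esymm k := by
    simp [Multiset.esymm, Multiset.powersetCard_cons, Multiset.sum_map_mul_left]
  induction s using Multiset.induction with
  | empty => simp [Multiset.esymm, Multiset.powersetCard_zero_right]
  | cons a s ih =>
    have : s.esymm 0 = 1 := by simp [Multiset.esymm]
    rw [Multiset.map_cons, Multiset.sum_cons, ih]
    simp only [esymm_cons _ _ 0, esymm_cons _ _ 1, esymm_cons _ _ 2, esymm_cons _ _ 3, this]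
    ring

lemma RealRooted.splits {p : ℝ[X]} (hp : RealRooted p) : p.Splits := by
  refine (IsAlgClosed.splits (p.map (algebraMap ℝ ℂ))).of_splits_map _ fun z hz => ?_
  have : z.im = 0 := hp.2 z (by simpa [eval_map_algebraMap] using isRoot_of_mem_roots hz)
  exact ⟨z.re, Complex.ext rfl this.symm⟩

lemma sum_pow_four_roots_nonneg {K : Type*} [Field K] [LinearOrder K] [IsStrictOrderedRing K]
    {p : K[X]} (hp : p.Splits) (hm : p.Monic) {n : ℕ} (hn : p.natDegree = n + 4) :
    0 ≤ p.coeff (n + 3) ^ 4 - 4 * p.coeff (n + 3) ^ 2 * p.coeff (n + 2) + 2 * p.coeff (n + 2) ^ 2 +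
      4 * p.coeff (n + 3) * p.coeff (n + 1) - 4 * p.coeff n := by
  have vieta (k : ℕ) (hk : k ≤ 4) : p.coeff (n + (4 - k)) = (-1) ^ k * p.roots.esymm k := by
    rw [coeff_eq_esymm_roots_of_splits hp (by omega), hm.leadingCoeff, one_mul,
      show p.natDegree - (n + (4 - k)) = k by omega]
  have nonneg : 0 ≤ (p.roots.map (· ^ 4)).sum :=
    Multiset.sum_nonneg fun x hx => by
      obtain ⟨r, -, rfl⟩ := Multiset.mem_map.1 hx
      positivity
  have h₁ : p.coeff (n + 3) = _ := vieta 1 (by norm_num)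
  have h₂ : p.coeff (n + 2) = _ := vieta 2 (by norm_num)
  have h₃ : p.coeff (n + 1) = _ := vieta 3 (by norm_num)
  have h₄ : p.coeff n = _ := vieta 4 (by norm_num)
  rw [sum_pow_four_eq_esymm] at nonneg
  rw [h₁, h₂, h₃, h₄]
  linarith

lemma not_realRooted_quintic :
    ¬ RealRooted (1 + C 43 * X + C 196 * X ^ 2 + C 168 * X ^ 3 + C 23 * X ^ 4 + X ^ 5) := by
  intro h
  have hdeg : (1 + C 43 * X + C 196 * X ^ 2 + C 168 * X ^ 3 + C 23 * X ^ 4 + X ^ 5 :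
      ℝ[X]).natDegree = 5 := by compute_degree!
  have sum_nonneg : (0 : ℝ) ≤ 23 ^ 4 - 4 * 23 ^ 2 * 168 + 2 * 168 ^ 2 + 4 * 23 * 196 - 4 * 43 := by
    simpa [coeff_one, coeff_X_pow, coeff_C] using
      sum_pow_four_roots_nonneg h.splits (by monicity!) (n := 1) hdeg
  norm_num at sum_nonneg

/-- For `π = [4, 6, 2, 1, 7, 3, 5] ∈ S_7`, the descent-generating polynomial of the lower
Bruhat interval is `1 + 43t + 196t² + 168t³ + 23t⁴ + t⁵`, and it is not real-rooted. -/
theorem bruhatDesPoly_pi7 :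
    bruhatDesPoly pi7 =
      1 + C 43 * X + C 196 * X ^ 2 + C 168 * X ^ 3 + C 23 * X ^ 4 + X ^ 5 ∧
    ¬ RealRooted (1 + C 43 * X + C 196 * X ^ 2 + C 168 * X ^ 3 + C 23 * X ^ 4 + X ^ 5) := by
  refine ⟨?_, not_realRooted_quintic⟩
  rw [bruhatDesPoly_eq_sum_words _ bruhatLE_pi7_iff_wordLEPi7, (descents_pi7.map _).sum_eq]
  simp only [List.map_append, List.map_replicate, List.map_cons, List.map_nil, List.sum_append,
    List.sum_replicate, List.sum_singleton, nsmul_eq_mul, map_ofNat]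
  push_cast
  ring
end
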